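/- Let d ≥ 5 and let L be the chronological loop erasure of a (transient) simple random walk on Z^d started at 0. Let M_N be the number of steps in L until its first hit of ∂_i Q_N. Then there exists a constant C₂, depending only on d, such that E( M_N^k ) ≤ C₂^k · k! · N^{2k} for all k ≥ 0 and N ≥ 1; consequently there exist constants c > 0 and C such that for all λ > 0 and N ≥ 1, P( M_N ≥ λ N² ) ≤ C exp( -c λ ). -/

import Mathlib

open MeasureTheory
open scoped ENNReal Classical

namespace USFPaper

/-- Vertices of the nearest-neighbour integer lattice `ℤ^d`. -/
abbrev V (d : ℕ) := Fin d → ℤ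

variable {d : ℕ}

/-- Nearest-neighbour adjacency in `ℤ^d`. -/
def adj (x y : V d) : Prop := (∑ i, |x i - y i|) = 1

/-- The cube `Q(x,r) = { y : ‖x - y‖_∞ ≤ r }`. -/
def cube (x : V d) (r : ℕ) : Set (V d) := { y | ∀ i, |y i - x i| ≤ (r : ℤ) }

/-- Inner boundary `∂ᵢA` of a set `A`. -/
def innerBdry (A : Set (V d)) : Set (V d) := { x | x ∈ A ∧ ∃ y, adj x y ∧ y ∉ A }

/-- Euclidean distance on `ℤ^d`. -/
noncomputable def eudist (x y : V d) : ℝ := Real.sqrt (∑ i, ((x i : ℝ) - (y i : ℝ)) ^ 2)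

/-- The `k`-th coordinate unit vector. -/
def unitVec (k : ℕ) : V d := fun i => if (i : ℕ) = k then 1 else 0

/-- `μ` is the law of simple random walk on `ℤ^d` started at `x`, as a probability
measure on path space: every nearest-neighbour cylinder of length `n` starting at `x`
has probability `(2d)⁻ⁿ`. -/
def IsSRWLaw (μ : Measure (ℕ → V d)) (x : V d) : Prop :=
  IsProbabilityMeasure μ ∧
  ∀ (n : ℕ) (γ : ℕ → V d), γ 0 = x → (∀ i < n, adj (γ i) (γ (i + 1))) →
    μ { ω | ∀ i ≤ n, ω i = γ i } = (2 * (d : ℝ≥0∞))⁻¹ ^ n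

/-- First exit time `τ_A` from `A`, valued in `ℕ∞` (`⊤` if the path never leaves `A`). -/
noncomputable def exitTimeE (A : Set (V d)) (ω : ℕ → V d) : ENat :=
  if h : ∃ j, ω j ∉ A then (Nat.find h : ENat) else ⊤

/-- First hitting time `T_A` of `A`, valued in `ℕ∞`. -/
noncomputable def hitTimeE (A : Set (V d)) (ω : ℕ → V d) : ENat :=
  if h : ∃ j, ω j ∈ A then (Nat.find h : ENat) else ⊤

/-- First positive hitting time `T⁺_A` of `A`, valued in `ℕ∞`. -/
noncomputable def hitTimePosE (A : Set (V d)) (ω : ℕ → V d) : ENat :=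
  if h : ∃ j, 1 ≤ j ∧ ω j ∈ A then (Nat.find h : ENat) else ⊤

/-- First exit time from `A` as a natural number (junk value `0` if the path never exits). -/
noncomputable def exitTime (A : Set (V d)) (ω : ℕ → V d) : ℕ := (exitTimeE A ω).toNat

/-- Index of the first hit of `A` (junk value `0` if `A` is never hit). -/
noncomputable def hitIdx (A : Set (V d)) (γ : ℕ → V d) : ℕ := (hitTimeE A γ).toNat

/-- First index `≥ t` at which the path lies in `A` (junk value `t`). -/
noncomputable def hitIdxFrom (A : Set (V d)) (t : ℕ) (γ : ℕ → V d) : ℕ :=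
  if h : ∃ j, t ≤ j ∧ γ j ∈ A then Nat.find h else t

/-- The path frozen at its first exit from `D`. -/
noncomputable def stopAt (D : Set (V d)) (ω : ℕ → V d) : ℕ → V d :=
  fun j => if (j : ENat) ≤ exitTimeE D ω then ω j else ω (exitTime D ω)

/-- Time of the last visit of the path to the point `ω t`, at or after time `t`
(junk value if there are infinitely many such visits). -/
noncomputable def lastVisit (ω : ℕ → V d) (t : ℕ) : ℕ := sSup { j | t ≤ j ∧ ω j = ω t }

/-- The times of the chronological loop erasure (last-exit decomposition). -/
noncomputable def leTime (ω : ℕ → V d) : ℕ → ℕ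
  | 0 => lastVisit ω 0
  | k + 1 => lastVisit ω (leTime ω k + 1)

/-- Chronological loop erasure of an (infinite, transient) path. -/
noncomputable def infLoopErase (ω : ℕ → V d) : ℕ → V d := fun k => ω (leTime ω k)

/-- The loop erasure `L` of the walk stopped at its first exit from `D`. -/
noncomputable def lerw (D : Set (V d)) (ω : ℕ → V d) : ℕ → V d := infLoopErase (stopAt D ω)

/-- The event `T_A > τ_D`: the walk does not visit `A` at any time up to (and
including) its first exit from `D`; if it never exits `D`, it never visits `A`. -/
def avoidBeforeExit (D A : Set (V d)) (ω : ℕ → V d) : Prop :=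
  ∀ j : ℕ, (j : ENat) ≤ exitTimeE D ω → ω j ∉ A

/-- The event `T⁺_A > τ_D` (visits of `A` at positive times only). -/
def avoidBeforeExitPos (D A : Set (V d)) (ω : ℕ → V d) : Prop :=
  ∀ j : ℕ, 1 ≤ j → (j : ENat) ≤ exitTimeE D ω → ω j ∉ A

/-- The right-hand face (in the first coordinate direction) of the cube `Q(x₀,m)`. -/
def rightFace (x₀ : V d) (m : ℕ) : Set (V d) :=
  { y | y ∈ cube x₀ m ∧ ∀ i : Fin d, (i : ℕ) = 0 → y i = x₀ i + (m : ℤ) }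

/-!
Every vertex of the loop erasure before its first hit of `∂ᵢA` is visited by the walk inside `A`, at
distinct times, so `M_N` is at most the total time the walk spends in `Q_N`.  That time has an
exponential moment at a rate of order `N⁻²`: for `d ≥ 3` the function
`g x = 1 + (a / (a + |x|²))^{1/4}` with `a` of order `N²` takes values in `[1, 2]`, is
superharmonic, and has drift at most `-c / N²` on `Q_N`.  Hence `exp (c / (2 N²) · visits) · g` is a
supermartingale, and its expectation stays below `2`.  The moment bounds follow from
`t ^ k / k! ≤ exp t`, the tail bound from Markov's inequality.
-/

/-! ### Lattice steps and the squared norm -/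

/-- The nearest neighbour of `x` in direction `s.1` with orientation `s.2`; the steps
`Fin d × ℤˣ` enumerate the `2d` neighbours of a vertex. -/
def neighbor (x : V d) (s : Fin d × ℤˣ) : V d := x + Pi.single s.1 (s.2 : ℤ)

lemma adj_neighbor (x : V d) (s : Fin d × ℤˣ) : adj x (neighbor x s) := by
  have habs : ∀ i, |x i - neighbor x s i| = Pi.single (M := fun _ => ℤ) s.1 1 i := by
    intro i
    rcases eq_or_ne i s.1 with rfl | hi
    · simp [neighbor, ← Int.natCast_natAbs]
    · simp [neighbor, hi]
  rw [adj, Finset.sum_congr rfl fun i _ => habs i, Fintype.sum_pi_single']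

lemma neighbor_injective (x : V d) : Function.Injective (neighbor x) := by
  rintro ⟨i, u⟩ ⟨j, v⟩ h
  have hsingle : (Pi.single i (u : ℤ) : V d) = Pi.single j (v : ℤ) := add_left_cancel h
  have hij : i = j := by
    by_contra hij
    simpa [hij] using congrFun hsingle i
  subst hij
  exact Prod.ext rfl (Units.ext (Pi.single_injective i hsingle))

/-- The squared Euclidean norm on `ℤ^d`, real valued since it only enters analytic estimates. -/
def sqNorm (x : V d) : ℝ := ∑ i, (x i : ℝ) ^ 2

lemma sqNorm_nonneg (x : V d) : 0 ≤ sqNorm x := Finset.sum_nonneg fun _ _ => sq_nonneg _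

lemma sq_apply_le_sqNorm (x : V d) (i : Fin d) : (x i : ℝ) ^ 2 ≤ sqNorm x :=
  Finset.single_le_sum (f := fun i => (x i : ℝ) ^ 2) (fun _ _ => sq_nonneg _) (Finset.mem_univ i)

lemma sqNorm_le_of_mem_cube {x : V d} {N : ℕ} (hx : x ∈ cube 0 N) :
    sqNorm x ≤ d * (N : ℝ) ^ 2 := by
  have hcoord : ∀ i ∈ Finset.univ, (x i : ℝ) ^ 2 ≤ (N : ℝ) ^ 2 := fun i _ => by
    have hi : |x i| ≤ N := by simpa using hx i
    exact sq_le_sq.2 ((by exact_mod_cast hi : |(x i : ℝ)| ≤ N).trans (le_abs_self _))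
  simpa [sqNorm] using Finset.sum_le_sum hcoord

lemma sqNorm_neighbor_sub (x : V d) (s : Fin d × ℤˣ) :
    sqNorm (neighbor x s) - sqNorm x = 1 + 2 * ((s.2 : ℤ) * x s.1) := by
  have hcoord : ∀ i, (neighbor x s i : ℝ) ^ 2 = (x i : ℝ) ^ 2 +
      Pi.single (M := fun _ => ℝ) s.1 (1 + 2 * ((s.2 : ℤ) * x s.1 : ℝ)) i := by
    intro i
    rcases eq_or_ne i s.1 with rfl | hi
    · rcases Int.units_eq_one_or s.2 with h | h <;> simp [neighbor, h] <;> ring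
    · simp [neighbor, hi]
  simp only [sqNorm, hcoord, Finset.sum_add_distrib, Fintype.sum_pi_single', add_sub_cancel_left]

lemma sum_step {M : Type*} [AddCommMonoid M] (f : Fin d × ℤˣ → M) :
    ∑ s, f s = ∑ i, (f (i, 1) + f (i, -1)) := by
  rw [Fintype.sum_prod_type]
  exact Finset.sum_congr rfl fun i _ => Finset.sum_pair (by decide)

lemma sum_sqNorm_neighbor_sub (x : V d) :
    ∑ s, (sqNorm (neighbor x s) - sqNorm x) = 2 * d := by
  have hpair : ∀ t : ℝ, 1 + 2 * t + (1 + 2 * -t) = 2 := fun t => by ring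
  simp only [sum_step, sqNorm_neighbor_sub, Units.val_one, Units.val_neg, Int.cast_one,
    Int.cast_neg, one_mul, neg_mul, hpair]
  simp [mul_comm]

lemma sum_sqNorm_neighbor_sub_sq (x : V d) :
    ∑ s, (sqNorm (neighbor x s) - sqNorm x) ^ 2 = 2 * d + 8 * sqNorm x := by
  have hpair : ∀ t : ℝ, (1 + 2 * t) ^ 2 + (1 + 2 * -t) ^ 2 = 2 + 8 * t ^ 2 := fun t => by ring
  simp only [sum_step, sqNorm_neighbor_sub, Units.val_one, Units.val_neg, Int.cast_one,
    Int.cast_neg, one_mul, neg_mul, hpair, Finset.sum_add_distrib, ← Finset.mul_sum]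
  simp [sqNorm, mul_comm]

lemma abs_sqNorm_neighbor_sub_le {R : ℝ} (hR : 4000 ≤ R) {x : V d} (hx : sqNorm x ≤ R)
    (s : Fin d × ℤˣ) : |sqNorm (neighbor x s) - sqNorm x| ≤ R / 30 := by
  rw [sqNorm_neighbor_sub]
  set t : ℝ := (s.2 : ℤ) * x s.1 with ht
  have hsq : t ^ 2 ≤ R := by
    have hxs := (sq_apply_le_sqNorm x s.1).trans hx
    rcases Int.units_eq_one_or s.2 with h | h <;> simpa [ht, h] using hxs
  rw [abs_le]
  constructor <;> nlinarith [sq_nonneg (t - 62), sq_nonneg (t + 62)]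

/-! ### A superharmonic function -/

lemma one_add_rpow_neg_quarter_le {u : ℝ} (hu : |u| ≤ 1 / 30) :
    (1 + u) ^ (-(1 / 4) : ℝ) ≤ 1 - u / 4 + u ^ 2 / 6 := by
  obtain ⟨hl, hr⟩ := abs_le.mp hu
  have hsqrt : 1 - u / 2 + 7 / 18 * u ^ 2 ≤ (1 - u / 4 + u ^ 2 / 6) ^ 2 := by
    nlinarith [sq_nonneg (u ^ 2), mul_nonneg (sq_nonneg u) (sub_nonneg.2 hr)]
  have hinv : 1 ≤ (1 - u / 2 + 7 / 18 * u ^ 2) ^ 2 * (1 + u) := by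
    nlinarith [mul_nonneg (sq_nonneg u) (sub_nonneg.2 hl), sq_nonneg (u ^ 2),
      mul_nonneg (sq_nonneg (u ^ 2)) (sub_nonneg.2 hl),
      mul_nonneg (sq_nonneg u) (mul_nonneg (sub_nonneg.2 hl) (sub_nonneg.2 hr))]
  have hpow : (1 + u)⁻¹ ≤ (1 - u / 4 + u ^ 2 / 6) ^ 4 := by
    rw [inv_le_iff_one_le_mul₀ (by linarith)]
    calc 1 ≤ (1 - u / 2 + 7 / 18 * u ^ 2) ^ 2 * (1 + u) := hinv
      _ ≤ ((1 - u / 4 + u ^ 2 / 6) ^ 2) ^ 2 * (1 + u) := by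
        have : 0 ≤ 1 - u / 2 + 7 / 18 * u ^ 2 := by nlinarith
        gcongr
        linarith
      _ = (1 - u / 4 + u ^ 2 / 6) ^ 4 * (1 + u) := by ring
  calc (1 + u) ^ (-(1 / 4) : ℝ) = (1 + u)⁻¹ ^ ((4 : ℕ) : ℝ)⁻¹ := by
        rw [Real.inv_rpow (by linarith), ← Real.rpow_neg (by linarith)]; norm_num
    _ ≤ ((1 - u / 4 + u ^ 2 / 6) ^ 4) ^ ((4 : ℕ) : ℝ)⁻¹ :=
      Real.rpow_le_rpow (inv_nonneg.2 (by linarith)) hpow (by positivity)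
    _ = 1 - u / 4 + u ^ 2 / 6 :=
      Real.pow_rpow_inv_natCast (by nlinarith) (by norm_num)

/-- The potential `(a / (a + |x|²))^{1/4}`.  In dimension `d ≥ 3` any exponent below `(d - 2) / 2`
gives a function that is superharmonic once `a` is large; `1/4` works in all these dimensions. -/
noncomputable def potential (a : ℝ) (x : V d) : ℝ := (a / (a + sqNorm x)) ^ (1 / 4 : ℝ)

lemma potential_nonneg {a : ℝ} (ha : 0 ≤ a) (x : V d) : 0 ≤ potential a x :=
  Real.rpow_nonneg (div_nonneg ha (add_nonneg ha (sqNorm_nonneg x))) _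

lemma div_add_sqNorm_le_one {a : ℝ} (ha : 0 ≤ a) (x : V d) : a / (a + sqNorm x) ≤ 1 :=
  div_le_one_of_le₀ (le_add_of_nonneg_right (sqNorm_nonneg x)) (add_nonneg ha (sqNorm_nonneg x))

lemma potential_le_one {a : ℝ} (ha : 0 ≤ a) (x : V d) : potential a x ≤ 1 :=
  Real.rpow_le_one (div_nonneg ha (add_nonneg ha (sqNorm_nonneg x)))
    (div_add_sqNorm_le_one ha x) (by norm_num)

lemma div_le_potential {a : ℝ} (ha : 0 ≤ a) (x : V d) : a / (a + sqNorm x) ≤ potential a x :=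
  Real.self_le_rpow_of_le_one (div_nonneg ha (add_nonneg ha (sqNorm_nonneg x)))
    (div_add_sqNorm_le_one ha x) (by norm_num)

lemma potential_neighbor_le {a : ℝ} (ha : 4000 ≤ a) (x : V d) (s : Fin d × ℤˣ) :
    potential a (neighbor x s) ≤ potential a x *
      (1 - (sqNorm (neighbor x s) - sqNorm x) / (a + sqNorm x) / 4 +
        ((sqNorm (neighbor x s) - sqNorm x) / (a + sqNorm x)) ^ 2 / 6) := by
  have hx := sqNorm_nonneg x
  set R := a + sqNorm x with hR
  set u := (sqNorm (neighbor x s) - sqNorm x) / R with hu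
  have hR_pos : 0 < R := by linarith
  have hu_le : |u| ≤ 1 / 30 := by
    rw [hu, abs_div, abs_of_pos hR_pos, div_le_iff₀ hR_pos]
    linarith [abs_sqNorm_neighbor_sub_le (by linarith) (by linarith : sqNorm x ≤ R) s]
  have hone_add : 0 ≤ 1 + u := by linarith [(abs_le.mp hu_le).1]
  have hnorm : a + sqNorm (neighbor x s) = R * (1 + u) := by
    rw [hu, mul_add, mul_one, mul_div_cancel₀ _ hR_pos.ne', hR]
    ring
  calc potential a (neighbor x s) = (a / R * (1 + u)⁻¹) ^ (1 / 4 : ℝ) := by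
        rw [potential, hnorm, div_mul_eq_div_div, div_eq_mul_inv (a / R)]
    _ = potential a x * (1 + u) ^ (-(1 / 4) : ℝ) := by
        rw [Real.mul_rpow (by positivity) (by positivity), Real.inv_rpow hone_add,
          ← Real.rpow_neg hone_add, potential]
    _ ≤ potential a x * (1 - u / 4 + u ^ 2 / 6) :=
        mul_le_mul_of_nonneg_left (one_add_rpow_neg_quarter_le hu_le)
          (potential_nonneg (by linarith) x)

lemma sum_potential_neighbor_le (hd : 3 ≤ d) {a : ℝ} (ha : 4000 ≤ a) (x : V d) :
    ∑ s, potential a (neighbor x s) ≤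
      2 * d * (potential a x * (1 - 1 / (40 * (a + sqNorm x)))) := by
  have hx := sqNorm_nonneg x
  set R := a + sqNorm x
  have hR_le : 4000 ≤ R := le_add_of_le_of_nonneg ha hx
  have hd' : (3 : ℝ) ≤ d := by exact_mod_cast hd
  have hbound : 2 * d - 2 * d / R / 4 + (2 * d + 8 * sqNorm x) / R ^ 2 / 6 ≤
      2 * d * (1 - 1 / (40 * R)) := by
    have hdiff : 2 * d * (1 - 1 / (40 * R)) -
        (2 * d - 2 * d / R / 4 + (2 * d + 8 * sqNorm x) / R ^ 2 / 6) =
        ((9 / 20 * d * R - d / 3) - 4 / 3 * sqNorm x) / R ^ 2 := by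
      field_simp
      ring
    have hnum : 0 ≤ (9 / 20 * d * R - d / 3) - 4 / 3 * sqNorm x := by
      have hx_le : sqNorm x ≤ R := le_add_of_nonneg_left (by linarith)
      nlinarith only [hx_le, hR_le, hd', hx]
    linarith [div_nonneg hnum (sq_nonneg R)]
  calc ∑ s, potential a (neighbor x s)
      ≤ ∑ s, potential a x * (1 - (sqNorm (neighbor x s) - sqNorm x) / R / 4 +
          ((sqNorm (neighbor x s) - sqNorm x) / R) ^ 2 / 6) :=
        Finset.sum_le_sum fun s _ => potential_neighbor_le ha x s
    _ = potential a x * (2 * d - 2 * d / R / 4 + (2 * d + 8 * sqNorm x) / R ^ 2 / 6) := by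
        simp only [div_pow, ← Finset.mul_sum, Finset.sum_add_distrib, Finset.sum_sub_distrib,
          ← Finset.sum_div]
        rw [← Finset.sum_sub_distrib, sum_sqNorm_neighbor_sub, sum_sqNorm_neighbor_sub_sq]
        simp [mul_comm]
    _ ≤ potential a x * (2 * d * (1 - 1 / (40 * R))) :=
        mul_le_mul_of_nonneg_left hbound (potential_nonneg (by linarith) x)
    _ = 2 * d * (potential a x * (1 - 1 / (40 * R))) := by ring

/-! ### Cylinders of the walk and a discrete Feynman–Kac bound -/

/-- The first `n` steps of the path `γ` form a nearest-neighbour path from `x`. -/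
def IsWalkFrom (x : V d) (γ : ℕ → V d) (n : ℕ) : Prop :=
  γ 0 = x ∧ ∀ i < n, adj (γ i) (γ (i + 1))

/-- The path `γ` with its vertex at time `n + 1` replaced by the neighbour of `γ n` in direction
`s`; only the first `n + 1` steps of the result are meaningful. -/
def extendPath (γ : ℕ → V d) (n : ℕ) (s : Fin d × ℤˣ) : ℕ → V d :=
  Function.update γ (n + 1) (neighbor (γ n) s)

lemma extendPath_of_le (γ : ℕ → V d) (s : Fin d × ℤˣ) {i n : ℕ} (hi : i ≤ n) :
    extendPath γ n s i = γ i :=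
  Function.update_of_ne (by omega) _ _

lemma extendPath_succ (γ : ℕ → V d) (n : ℕ) (s : Fin d × ℤˣ) :
    extendPath γ n s (n + 1) = neighbor (γ n) s :=
  Function.update_self ..

lemma isWalkFrom_const (x : V d) : IsWalkFrom x (fun _ => x) 0 := ⟨rfl, by simp⟩

lemma IsWalkFrom.extendPath {x : V d} {γ : ℕ → V d} {n : ℕ} (hγ : IsWalkFrom x γ n)
    (s : Fin d × ℤˣ) : IsWalkFrom x (extendPath γ n s) (n + 1) := by
  refine ⟨(extendPath_of_le γ s n.zero_le).trans hγ.1, fun i hi => ?_⟩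
  rcases Nat.lt_succ_iff_lt_or_eq.mp hi with hlt | rfl
  · rw [extendPath_of_le γ s hlt.le, extendPath_of_le γ s hlt]
    exact hγ.2 i hlt
  · rw [extendPath_of_le γ s le_rfl, extendPath_succ]
    exact adj_neighbor _ _

lemma measurableSet_cylinder (γ : ℕ → V d) (n : ℕ) : MeasurableSet (PiNat.cylinder γ n) :=
  (PiNat.isOpen_cylinder _ γ n).measurableSet

lemma pairwise_disjoint_cylinder_extendPath (γ : ℕ → V d) (n : ℕ) :
    Pairwise (Function.onFun Disjoint fun s => PiNat.cylinder (extendPath γ n s) (n + 1 + 1)) := by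
  refine fun s t hst => Set.disjoint_left.mpr fun ω hs ht => hst (neighbor_injective (γ n) ?_)
  rw [← extendPath_succ, ← extendPath_succ, ← hs (n + 1) (by omega), ht (n + 1) (by omega)]

lemma cylinder_extendPath_subset (γ : ℕ → V d) (n : ℕ) (s : Fin d × ℤˣ) :
    PiNat.cylinder (extendPath γ n s) (n + 1 + 1) ⊆ PiNat.cylinder γ (n + 1) := fun ω hω i hi => by
  rw [hω i (by omega), extendPath_of_le γ s (by omega)]

lemma two_mul_natCast_mul_inv (hd : d ≠ 0) : 2 * (d : ℝ≥0∞) * (2 * (d : ℝ≥0∞))⁻¹ = 1 :=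
  ENNReal.mul_inv_cancel (by simpa using hd) (by finiteness)

namespace IsSRWLaw

variable {μ : Measure (ℕ → V d)} {x : V d} {γ : ℕ → V d} {n : ℕ}

lemma measure_cylinder (hμ : IsSRWLaw μ x) (hγ : IsWalkFrom x γ n) :
    μ (PiNat.cylinder γ (n + 1)) = (2 * (d : ℝ≥0∞))⁻¹ ^ n := by
  simpa only [PiNat.cylinder, Nat.lt_succ_iff] using hμ.2 n γ hγ.1 hγ.2

lemma ae_apply_zero (hμ : IsSRWLaw μ x) : ∀ᵐ ω ∂μ, ω 0 = x := by
  have := hμ.1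
  have hone : μ (PiNat.cylinder (fun _ => x) 1) = 1 := by
    simpa using hμ.measure_cylinder (isWalkFrom_const x)
  filter_upwards [(prob_compl_eq_zero_iff (measurableSet_cylinder _ _)).mpr hone] with ω hω
  exact hω 0 one_pos

lemma cylinder_ae_eq_iUnion (hd : d ≠ 0) (hμ : IsSRWLaw μ x) (hγ : IsWalkFrom x γ n) :
    PiNat.cylinder γ (n + 1) =ᵐ[μ] ⋃ s, PiNat.cylinder (extendPath γ n s) (n + 1 + 1) := by
  have := hμ.1
  have hmass : μ (⋃ s, PiNat.cylinder (extendPath γ n s) (n + 1 + 1)) =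
      μ (PiNat.cylinder γ (n + 1)) := by
    rw [measure_iUnion (pairwise_disjoint_cylinder_extendPath γ n)
      fun s => measurableSet_cylinder _ _, tsum_fintype]
    simp only [hμ.measure_cylinder (hγ.extendPath _), hμ.measure_cylinder hγ, Finset.sum_const,
      Finset.card_univ, Fintype.card_prod, Fintype.card_fin, Fintype.card_units_int, nsmul_eq_mul,
      Nat.cast_mul, Nat.cast_ofNat]
    rw [pow_succ', ← mul_assoc, mul_comm (d : ℝ≥0∞) 2, two_mul_natCast_mul_inv hd, one_mul]
  exact (ae_eq_of_subset_of_measure_ge (Set.iUnion_subset (cylinder_extendPath_subset γ n))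
    hmass.ge (MeasurableSet.iUnion fun s => measurableSet_cylinder _ _).nullMeasurableSet
    (measure_ne_top _ _)).symm

lemma ae_restrict_cylinder_adj (hd : d ≠ 0) (hμ : IsSRWLaw μ x) (m : ℕ)
    (hγ : IsWalkFrom x γ n) :
    ∀ᵐ ω ∂μ.restrict (PiNat.cylinder γ (n + 1)), adj (ω (n + m)) (ω (n + m + 1)) := by
  induction m generalizing n γ with
  | zero =>
    rw [ae_restrict_congr_set (hμ.cylinder_ae_eq_iUnion hd hγ), ae_restrict_iUnion_iff]
    refine fun s => ae_restrict_of_forall_mem (measurableSet_cylinder _ _) fun ω hω => ?_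
    rw [add_zero, hω n (by omega), hω (n + 1) (by omega)]
    exact (hγ.extendPath s).2 n (by omega)
  | succ m ih =>
    rw [ae_restrict_congr_set (hμ.cylinder_ae_eq_iUnion hd hγ), ae_restrict_iUnion_iff]
    intro s
    simpa only [add_assoc, add_comm 1] using ih (hγ.extendPath s)

lemma restrict_cylinder_const (hμ : IsSRWLaw μ x) :
    μ.restrict (PiNat.cylinder (fun _ => x) 1) = μ := by
  refine Measure.restrict_eq_self_of_ae_mem ?_
  filter_upwards [hμ.ae_apply_zero] with ω hω i hi
  rw [Nat.lt_one_iff.mp hi, hω]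

lemma ae_adj (hd : d ≠ 0) (hμ : IsSRWLaw μ x) : ∀ᵐ ω ∂μ, ∀ i, adj (ω i) (ω (i + 1)) := by
  refine ae_all_iff.2 fun i => ?_
  simpa only [hμ.restrict_cylinder_const, zero_add] using
    hμ.ae_restrict_cylinder_adj hd i (isWalkFrom_const x)

section FeynmanKac

variable {w h : V d → ℝ≥0∞}

lemma setLIntegral_cylinder_prod_mul_le (hd : d ≠ 0) (hμ : IsSRWLaw μ x)
    (hwh : ∀ y, w y * ∑ s, h (neighbor y s) ≤ 2 * d * h y) (m : ℕ) (hγ : IsWalkFrom x γ n) :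
    ∫⁻ ω in PiNat.cylinder γ (n + 1), (∏ j ∈ Finset.range m, w (ω (n + j))) * h (ω (n + m)) ∂μ
      ≤ (2 * (d : ℝ≥0∞))⁻¹ ^ n * h (γ n) := by
  induction m generalizing n γ with
  | zero =>
    rw [setLIntegral_congr_fun (g := fun _ => h (γ n)) (measurableSet_cylinder _ _)
      fun ω hω => by simp [hω n (by omega)]]
    simp [hμ.measure_cylinder hγ, mul_comm]
  | succ m ih =>
    have hw : Measurable w := .of_discrete
    have hh : Measurable h := .of_discrete
    have hstep : ∀ s, ∀ ω ∈ PiNat.cylinder (extendPath γ n s) (n + 1 + 1),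
        (∏ j ∈ Finset.range (m + 1), w (ω (n + j))) * h (ω (n + (m + 1))) =
          w (γ n) * ((∏ j ∈ Finset.range m, w (ω (n + 1 + j))) * h (ω (n + 1 + m))) := by
      intro s ω hω
      have hωn : ω n = γ n := (hω n (by omega)).trans (extendPath_of_le γ s le_rfl)
      simp only [Finset.prod_range_succ', add_zero, hωn, add_assoc, add_comm 1]
      ring
    calc _ = ∑ s, ∫⁻ ω in PiNat.cylinder (extendPath γ n s) (n + 1 + 1),
            (∏ j ∈ Finset.range (m + 1), w (ω (n + j))) * h (ω (n + (m + 1))) ∂μ := by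
          rw [setLIntegral_congr (hμ.cylinder_ae_eq_iUnion hd hγ),
            lintegral_iUnion (fun s => measurableSet_cylinder _ _)
              (pairwise_disjoint_cylinder_extendPath γ n), tsum_fintype]
      _ ≤ ∑ s, w (γ n) * ((2 * (d : ℝ≥0∞))⁻¹ ^ (n + 1) * h (neighbor (γ n) s)) := by
          refine Finset.sum_le_sum fun s _ => ?_
          rw [setLIntegral_congr_fun (measurableSet_cylinder _ _) (hstep s),
            lintegral_const_mul _ (by fun_prop)]
          gcongr
          simpa only [extendPath_succ] using ih (hγ.extendPath s)
      _ = (2 * (d : ℝ≥0∞))⁻¹ ^ (n + 1) * (w (γ n) * ∑ s, h (neighbor (γ n) s)) := by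
          simp only [Finset.mul_sum, mul_left_comm]
      _ ≤ (2 * (d : ℝ≥0∞))⁻¹ ^ (n + 1) * (2 * d * h (γ n)) := by
          gcongr _ * ?_
          exact hwh (γ n)
      _ = (2 * (d : ℝ≥0∞))⁻¹ ^ n * h (γ n) := by
          rw [pow_succ, mul_assoc, ← mul_assoc _ (2 * (d : ℝ≥0∞)), mul_comm _ (2 * (d : ℝ≥0∞)),
            two_mul_natCast_mul_inv hd, one_mul]

lemma lintegral_prod_mul_le (hd : d ≠ 0) (hμ : IsSRWLaw μ x)
    (hwh : ∀ y, w y * ∑ s, h (neighbor y s) ≤ 2 * d * h y) (m : ℕ) :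
    ∫⁻ ω, (∏ j ∈ Finset.range m, w (ω j)) * h (ω m) ∂μ ≤ h x := by
  simpa only [hμ.restrict_cylinder_const, zero_add, pow_zero, one_mul] using
    hμ.setLIntegral_cylinder_prod_mul_le hd hwh m (isWalkFrom_const x)

end FeynmanKac

end IsSRWLaw

/-! ### Exponential moments of the occupation time -/

/-- The weight equal to `exp θ` on `A` and to `1` off `A`, whose product along a path is the
exponential of `θ` times the time spent in `A`. -/
noncomputable def expWeight (θ : ℝ) (A : Set (V d)) : V d → ℝ≥0∞ :=
  A.mulIndicator fun _ => ENNReal.ofReal (Real.exp θ)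

/-- The exponential `exp (θ * T)` of the total time `T` that the path spends in `A`, written as a
supremum of finite products so that it makes sense (as `∞`) when `T` is infinite and `0 < θ`. -/
noncomputable def expOccupation (θ : ℝ) (A : Set (V d)) (ω : ℕ → V d) : ℝ≥0∞ :=
  ⨆ m, ∏ j ∈ Finset.range m, expWeight θ A (ω j)

section Occupation

variable {θ : ℝ} {A : Set (V d)}

lemma expWeight_of_mem {y : V d} (hy : y ∈ A) : expWeight θ A y = ENNReal.ofReal (Real.exp θ) :=
  Set.mulIndicator_of_mem hy _

lemma expWeight_of_notMem {y : V d} (hy : y ∉ A) : expWeight θ A y = 1 :=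
  Set.mulIndicator_of_notMem hy _

lemma one_le_expWeight (hθ : 0 ≤ θ) (y : V d) : 1 ≤ expWeight θ A y := by
  by_cases hy : y ∈ A
  · simpa [expWeight_of_mem hy] using hθ
  · exact (expWeight_of_notMem hy).ge

lemma measurable_prod_expWeight (m : ℕ) :
    Measurable fun ω : ℕ → V d => ∏ j ∈ Finset.range m, expWeight θ A (ω j) := by
  have : Measurable (expWeight θ A) := .of_discrete
  fun_prop

lemma measurable_expOccupation : Measurable (expOccupation θ A) :=
  .iSup measurable_prod_expWeight

lemma ofReal_exp_le_expOccupation (hθ : 0 ≤ θ) {ω : ℕ → V d} {n : ℕ}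
    (hn : (n : ℕ∞) ≤ {j | ω j ∈ A}.encard) :
    ENNReal.ofReal (Real.exp (θ * n)) ≤ expOccupation θ A ω := by
  obtain ⟨t, htA, htn⟩ := Set.exists_subset_encard_eq hn
  obtain ⟨s, rfl⟩ := (Set.finite_of_encard_eq_coe htn).exists_finset_coe
  rw [Set.encard_coe_eq_coe_finsetCard, Nat.cast_inj] at htn
  obtain ⟨m, hm⟩ := s.exists_nat_subset_range
  have hweight : ∀ j ∈ s, expWeight θ A (ω j) = ENNReal.ofReal (Real.exp θ) :=
    fun j hj => expWeight_of_mem (htA hj)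
  calc ENNReal.ofReal (Real.exp (θ * n))
      = ∏ j ∈ s, expWeight θ A (ω j) := by
        rw [Finset.prod_congr rfl hweight, Finset.prod_const, htn,
          ← ENNReal.ofReal_pow (Real.exp_pos θ).le, ← Real.exp_nat_mul, mul_comm]
    _ ≤ ∏ j ∈ Finset.range m, expWeight θ A (ω j) :=
        Finset.prod_le_prod_of_subset_of_one_le' hm fun j _ _ => one_le_expWeight hθ _
    _ ≤ expOccupation θ A ω := le_iSup_of_le m le_rfl

section Lyapunov

variable {g : V d → ℝ} {K : ℝ}

-- On `A` the drift `-Kθ` pays for the factor `exp θ`, since `exp (-θ) ≥ 1 - θ` and `g ≤ K`.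
lemma expWeight_mul_sum_neighbor_le (hθ : 0 ≤ θ) (hg_nonneg : ∀ y, 0 ≤ g y)
    (hg_le : ∀ y, g y ≤ K) (hg_super : ∀ y, ∑ s, g (neighbor y s) ≤ 2 * d * g y)
    (hg_drift : ∀ y ∈ A, ∑ s, g (neighbor y s) ≤ 2 * d * (g y - K * θ)) (y : V d) :
    expWeight θ A y * ∑ s, ENNReal.ofReal (g (neighbor y s)) ≤ 2 * d * ENNReal.ofReal (g y) := by
  rw [← ENNReal.ofReal_sum_of_nonneg fun s _ => hg_nonneg _, ← ENNReal.ofReal_ofNat 2,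
    ← ENNReal.ofReal_natCast, ← ENNReal.ofReal_mul two_pos.le,
    ← ENNReal.ofReal_mul (by positivity)]
  by_cases hy : y ∈ A
  · rw [expWeight_of_mem hy, ← ENNReal.ofReal_mul (Real.exp_pos θ).le]
    refine ENNReal.ofReal_le_ofReal ?_
    have hexp : g y - K * θ ≤ Real.exp (-θ) * g y := by
      nlinarith [Real.add_one_le_exp (-θ), hg_nonneg y, hg_le y]
    calc Real.exp θ * ∑ s, g (neighbor y s)
        ≤ Real.exp θ * (2 * d * (Real.exp (-θ) * g y)) := by
          gcongr
          exact (hg_drift y hy).trans (by gcongr)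
      _ = Real.exp θ * Real.exp (-θ) * (2 * d * g y) := by ring
      _ = 2 * d * g y := by rw [← Real.exp_add, add_neg_cancel, Real.exp_zero, one_mul]
  · rw [expWeight_of_notMem hy, one_mul]
    exact ENNReal.ofReal_le_ofReal (hg_super y)

lemma IsSRWLaw.lintegral_expOccupation_le {μ : Measure (ℕ → V d)} {x : V d} (hd : d ≠ 0)
    (hμ : IsSRWLaw μ x) (hθ : 0 ≤ θ) (hg_one : ∀ y, 1 ≤ g y)
    (hg_le : ∀ y, g y ≤ K) (hg_super : ∀ y, ∑ s, g (neighbor y s) ≤ 2 * d * g y)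
    (hg_drift : ∀ y ∈ A, ∑ s, g (neighbor y s) ≤ 2 * d * (g y - K * θ)) :
    ∫⁻ ω, expOccupation θ A ω ∂μ ≤ ENNReal.ofReal K := by
  have hmono : Monotone fun m (ω : ℕ → V d) => ∏ j ∈ Finset.range m, expWeight θ A (ω j) :=
    fun m m' hm ω => Finset.prod_le_prod_of_subset_of_one_le' (Finset.range_mono hm)
      fun j _ _ => one_le_expWeight hθ _
  simp only [expOccupation]
  rw [lintegral_iSup measurable_prod_expWeight hmono]
  refine iSup_le fun m => ?_
  calc ∫⁻ ω, ∏ j ∈ Finset.range m, expWeight θ A (ω j) ∂μ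
      ≤ ∫⁻ ω, (∏ j ∈ Finset.range m, expWeight θ A (ω j)) * ENNReal.ofReal (g (ω m)) ∂μ :=
        lintegral_mono fun ω => le_mul_of_one_le_right' (by simpa using hg_one (ω m))
    _ ≤ ENNReal.ofReal (g x) := hμ.lintegral_prod_mul_le hd
        (expWeight_mul_sum_neighbor_le hθ (fun y => zero_le_one.trans (hg_one y)) hg_le hg_super
          hg_drift) m
    _ ≤ ENNReal.ofReal K := ENNReal.ofReal_le_ofReal (hg_le x)

end Lyapunov

end Occupation

/-- A rate such that the time spent by the walk in `Q_N` has an exponential moment at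
`occupationRate d / N²`: with `a = 4000 N²` and `|x|² ≤ d N²`, the decrement
`potential a x / (40 (a + |x|²))` is at least `100 / ((4000 + d)² N²)`. -/
noncomputable def occupationRate (d : ℕ) : ℝ := 50 / (4000 + d) ^ 2

lemma occupationRate_pos (d : ℕ) : 0 < occupationRate d := by
  unfold occupationRate
  positivity

lemma two_mul_occupationRate_div_sq_le {N : ℕ} (hN : 1 ≤ N) {x : V d} (hx : x ∈ cube 0 N) :
    2 * (occupationRate d / (N : ℝ) ^ 2) ≤
      potential (4000 * (N : ℝ) ^ 2) x / (40 * (4000 * (N : ℝ) ^ 2 + sqNorm x)) := by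
  have : (0 : ℝ) < N := by exact_mod_cast hN
  have hnorm := sqNorm_le_of_mem_cube hx
  set R := 4000 * (N : ℝ) ^ 2 + sqNorm x
  have hR_pos : 0 < R := add_pos_of_pos_of_nonneg (by positivity) (sqNorm_nonneg x)
  calc 2 * (occupationRate d / (N : ℝ) ^ 2)
      = 100 * (N : ℝ) ^ 2 / ((4000 + d) * (N : ℝ) ^ 2) ^ 2 := by
        unfold occupationRate
        field_simp
        norm_num
    _ ≤ 100 * (N : ℝ) ^ 2 / R ^ 2 := by
        gcongr
        linarith
    _ = 4000 * (N : ℝ) ^ 2 / R / (40 * R) := by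
        field_simp
        norm_num
    _ ≤ potential (4000 * (N : ℝ) ^ 2) x / (40 * R) := by
        gcongr
        exact div_le_potential (by positivity) x

lemma IsSRWLaw.lintegral_expOccupation_cube_le {μ : Measure (ℕ → V d)} {x : V d} (hd : 3 ≤ d)
    (hμ : IsSRWLaw μ x) {N : ℕ} (hN : 1 ≤ N) :
    ∫⁻ ω, expOccupation (occupationRate d / (N : ℝ) ^ 2) (cube 0 N) ω ∂μ ≤ 2 := by
  set a : ℝ := 4000 * (N : ℝ) ^ 2
  have ha : 4000 ≤ a := le_mul_of_one_le_right (by norm_num) (one_le_pow₀ (by exact_mod_cast hN))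
  have ha_nonneg : 0 ≤ a := by linarith
  have hsum : ∀ y : V d, ∑ s, (1 + potential a (neighbor y s)) ≤
      2 * d * (1 + potential a y - potential a y / (40 * (a + sqNorm y))) := by
    intro y
    calc ∑ s, (1 + potential a (neighbor y s))
        = 2 * d + ∑ s, potential a (neighbor y s) := by
          simp [Finset.sum_add_distrib, mul_comm]
      _ ≤ 2 * d + 2 * d * (potential a y * (1 - 1 / (40 * (a + sqNorm y)))) := by
          gcongr
          exact sum_potential_neighbor_le hd ha y
      _ = 2 * d * (1 + potential a y - potential a y / (40 * (a + sqNorm y))) := by ring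
  rw [← ENNReal.ofReal_ofNat 2]
  refine hμ.lintegral_expOccupation_le (g := fun y => 1 + potential a y) (by omega)
    (div_nonneg (occupationRate_pos d).le (sq_nonneg _))
    (fun y => le_add_of_nonneg_right (potential_nonneg ha_nonneg y))
    (fun y => by linarith [potential_le_one ha_nonneg y])
    (fun y => (hsum y).trans ?_) (fun y hy => (hsum y).trans ?_)
  · have hdecrement : 0 ≤ potential a y / (40 * (a + sqNorm y)) :=
      div_nonneg (potential_nonneg ha_nonneg y) (by linarith [sqNorm_nonneg y])
    gcongr
    linarith
  · gcongr
    exact two_mul_occupationRate_div_sq_le hN hy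

/-! ### Loop erasure -/

lemma lerw_univ (ω : ℕ → V d) : lerw Set.univ ω = infLoopErase ω :=
  congrArg infLoopErase (funext fun j => by simp [stopAt, exitTimeE])

section LoopErasure

variable {A : Set (V d)} {ω : ℕ → V d}

lemma notMem_of_lt_hitIdx {i : ℕ} (hi : i < hitIdx A ω) : ω i ∉ A := by
  unfold hitIdx hitTimeE at hi
  split_ifs at hi with h
  · exact Nat.find_min h (by simpa using hi)
  · simp at hi

lemma lastVisit_mem {t : ℕ} (hfin : {j | ω j = ω t}.Finite) :
    t ≤ lastVisit ω t ∧ ω (lastVisit ω t) = ω t :=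
  Nat.sSup_mem (s := {j | t ≤ j ∧ ω j = ω t}) ⟨t, le_rfl, rfl⟩
    (hfin.subset fun _ hj => hj.2).bddAbove

lemma finite_visits_of_mem (hfin : {j | ω j ∈ A}.Finite) {t : ℕ} (ht : ω t ∈ A) :
    {j | ω j = ω t}.Finite :=
  hfin.subset fun j (hj : ω j = ω t) => show ω j ∈ A from hj ▸ ht

lemma mem_of_adj_of_notMem_innerBdry {x y : V d} (hx : x ∈ A) (hx' : x ∉ innerBdry A)
    (hxy : adj x y) : y ∈ A :=
  by_contra fun hy => hx' ⟨hx, y, hxy, hy⟩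

lemma infLoopErase_mem (hfin : {j | ω j ∈ A}.Finite) (h0 : ω 0 ∈ A)
    (hadj : ∀ i, adj (ω i) (ω (i + 1))) {k : ℕ}
    (hk : ∀ i < k, infLoopErase ω i ∉ innerBdry A) : infLoopErase ω k ∈ A := by
  induction k with
  | zero =>
    rwa [infLoopErase, leTime, (lastVisit_mem (finite_visits_of_mem hfin h0)).2]
  | succ k ih =>
    have hnext : ω (leTime ω k + 1) ∈ A := mem_of_adj_of_notMem_innerBdry
      (ih fun i hi => hk i (by omega)) (hk k k.lt_succ_self) (hadj _)
    rwa [infLoopErase, leTime, (lastVisit_mem (finite_visits_of_mem hfin hnext)).2]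

lemma leTime_lt_leTime_succ (hfin : {j | ω j ∈ A}.Finite) (h0 : ω 0 ∈ A)
    (hadj : ∀ i, adj (ω i) (ω (i + 1))) {k : ℕ}
    (hk : ∀ i ≤ k, infLoopErase ω i ∉ innerBdry A) : leTime ω k < leTime ω (k + 1) := by
  have hnext : ω (leTime ω k + 1) ∈ A := mem_of_adj_of_notMem_innerBdry
    (infLoopErase_mem hfin h0 hadj fun i hi => hk i hi.le) (hk k le_rfl) (hadj _)
  exact (lastVisit_mem (finite_visits_of_mem hfin hnext)).1

lemma hitIdx_innerBdry_infLoopErase_le_encard (h0 : ω 0 ∈ A)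
    (hadj : ∀ i, adj (ω i) (ω (i + 1))) :
    (hitIdx (innerBdry A) (infLoopErase ω) : ℕ∞) ≤ {j | ω j ∈ A}.encard := by
  rcases {j | ω j ∈ A}.finite_or_infinite with hfin | hinf
  · set n := hitIdx (innerBdry A) (infLoopErase ω)
    have hmono : StrictMonoOn (leTime ω) (Set.Iic n) := strictMonoOn_Iic_of_lt_succ fun k hk =>
      leTime_lt_leTime_succ hfin h0 hadj fun i hi => notMem_of_lt_hitIdx (hi.trans_lt hk)
    have hmem : leTime ω '' Set.Iio n ⊆ {j | ω j ∈ A} := by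
      rintro _ ⟨k, hk, rfl⟩
      exact infLoopErase_mem hfin h0 hadj fun i hi => notMem_of_lt_hitIdx (hi.trans hk)
    calc (n : ℕ∞) = (Set.Iio n).encard := by
          rw [← Finset.coe_range, Set.encard_coe_eq_coe_finsetCard, Finset.card_range]
      _ = (leTime ω '' Set.Iio n).encard :=
        ((hmono.injOn.mono Set.Iio_subset_Iic_self).encard_image).symm
      _ ≤ {j | ω j ∈ A}.encard := Set.encard_le_encard hmem
  · simp [hinf.encard_eq]

lemma IsSRWLaw.ae_ofReal_exp_hitIdx_le_expOccupation {μ : Measure (ℕ → V d)} {x : V d} {θ : ℝ}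
    (hd : d ≠ 0) (hμ : IsSRWLaw μ x) (hx : x ∈ A) (hθ : 0 ≤ θ) :
    ∀ᵐ ω ∂μ, ENNReal.ofReal (Real.exp (θ * hitIdx (innerBdry A) (lerw Set.univ ω))) ≤
      expOccupation θ A ω := by
  filter_upwards [hμ.ae_apply_zero, hμ.ae_adj hd] with ω h0 hadj
  rw [lerw_univ]
  exact ofReal_exp_le_expOccupation hθ
    (hitIdx_innerBdry_infLoopErase_le_encard (h0 ▸ hx) hadj)

end LoopErasure

/-! ### Moments and tails -/

section ExponentialMoment

variable {Ω : Type*} [MeasurableSpace Ω] {μ : Measure Ω} {X : Ω → ℝ} {G : Ω → ℝ≥0∞} {θ : ℝ}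

lemma lintegral_ofReal_pow_le_of_ofReal_exp_le (hθ : 0 < θ) (hX : ∀ ω, 0 ≤ X ω)
    (hXG : ∀ᵐ ω ∂μ, ENNReal.ofReal (Real.exp (θ * X ω)) ≤ G ω) (k : ℕ) :
    ∫⁻ ω, ENNReal.ofReal (X ω) ^ k ∂μ ≤ ENNReal.ofReal (k.factorial / θ ^ k) * ∫⁻ ω, G ω ∂μ := by
  rw [← lintegral_const_mul' _ _ ENNReal.ofReal_ne_top]
  refine lintegral_mono_ae (hXG.mono fun ω hω => ?_)
  calc ENNReal.ofReal (X ω) ^ k = ENNReal.ofReal (k.factorial / θ ^ k) *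
        ENNReal.ofReal ((θ * X ω) ^ k / k.factorial) := by
        rw [← ENNReal.ofReal_mul (by positivity), ← ENNReal.ofReal_pow (hX ω), mul_pow]
        field_simp
    _ ≤ ENNReal.ofReal (k.factorial / θ ^ k) * G ω := by
        gcongr
        exact (ENNReal.ofReal_le_ofReal
          (Real.pow_div_factorial_le_exp _ (mul_nonneg hθ.le (hX ω)) k)).trans hω

lemma measure_ge_le_of_ofReal_exp_le (hθ : 0 ≤ θ) (hG : AEMeasurable G μ)
    (hXG : ∀ᵐ ω ∂μ, ENNReal.ofReal (Real.exp (θ * X ω)) ≤ G ω) (t : ℝ) :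
    μ {ω | t ≤ X ω} ≤ ENNReal.ofReal (Real.exp (-θ * t)) * ∫⁻ ω, G ω ∂μ := by
  have hexp_pos := Real.exp_pos (θ * t)
  have hsub : {ω | t ≤ X ω} ≤ᵐ[μ] {ω | ENNReal.ofReal (Real.exp (θ * t)) ≤ G ω} :=
    hXG.mono fun ω hω (ht : t ≤ X ω) =>
      (ENNReal.ofReal_le_ofReal (Real.exp_le_exp.2 (by gcongr))).trans hω
  calc μ {ω | t ≤ X ω} ≤ μ {ω | ENNReal.ofReal (Real.exp (θ * t)) ≤ G ω} := measure_mono_ae hsub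
    _ ≤ (∫⁻ ω, G ω ∂μ) / ENNReal.ofReal (Real.exp (θ * t)) :=
        meas_ge_le_lintegral_div hG (by simpa using hexp_pos) ENNReal.ofReal_ne_top
    _ = ENNReal.ofReal (Real.exp (-θ * t)) * ∫⁻ ω, G ω ∂μ := by
        rw [ENNReal.div_eq_inv_mul, ← ENNReal.ofReal_inv_of_pos hexp_pos, ← Real.exp_neg, neg_mul]

end ExponentialMoment

section Cube

variable {μ : Measure (ℕ → V d)} {x : V d} {N : ℕ}

lemma IsSRWLaw.lintegral_hitIdx_innerBdry_cube_pow_le (hd : 3 ≤ d) (hμ : IsSRWLaw μ x)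
    (hN : 1 ≤ N) (hx : x ∈ cube 0 N) (k : ℕ) :
    ∫⁻ ω, (hitIdx (innerBdry (cube 0 N)) (lerw Set.univ ω) : ℝ≥0∞) ^ k ∂μ ≤
      ENNReal.ofReal ((2 / occupationRate d) ^ k * k.factorial * (N : ℝ) ^ (2 * k)) := by
  have := hμ.1
  rcases k.eq_zero_or_pos with rfl | hk
  · simp
  have hρ := occupationRate_pos d
  have : (0 : ℝ) < N := by exact_mod_cast hN
  set ρ := occupationRate d
  calc ∫⁻ ω, (hitIdx (innerBdry (cube 0 N)) (lerw Set.univ ω) : ℝ≥0∞) ^ k ∂μ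
      ≤ ENNReal.ofReal (k.factorial / (ρ / (N : ℝ) ^ 2) ^ k) *
          ∫⁻ ω, expOccupation (ρ / (N : ℝ) ^ 2) (cube 0 N) ω ∂μ := by
        simpa only [ENNReal.ofReal_natCast] using
          lintegral_ofReal_pow_le_of_ofReal_exp_le (by positivity) (fun ω => Nat.cast_nonneg _)
            (hμ.ae_ofReal_exp_hitIdx_le_expOccupation (by omega) hx (by positivity)) k
    _ ≤ ENNReal.ofReal (k.factorial / (ρ / (N : ℝ) ^ 2) ^ k) * ENNReal.ofReal (2 ^ k) := by
        gcongr
        exact (hμ.lintegral_expOccupation_cube_le hd hN).trans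
          (by simpa using ENNReal.ofReal_le_ofReal (le_self_pow₀ (one_le_two (α := ℝ)) hk.ne'))
    _ = ENNReal.ofReal ((2 / ρ) ^ k * k.factorial * (N : ℝ) ^ (2 * k)) := by
        rw [← ENNReal.ofReal_mul (by positivity), div_pow, div_pow, pow_mul]
        field_simp

lemma IsSRWLaw.measure_hitIdx_innerBdry_cube_ge_le (hd : 3 ≤ d) (hμ : IsSRWLaw μ x)
    (hN : 1 ≤ N) (hx : x ∈ cube 0 N) (lam : ℝ) :
    μ {ω | lam * (N : ℝ) ^ 2 ≤ (hitIdx (innerBdry (cube 0 N)) (lerw Set.univ ω) : ℝ)} ≤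
      ENNReal.ofReal (2 * Real.exp (-occupationRate d * lam)) := by
  have hrate : 0 ≤ occupationRate d / (N : ℝ) ^ 2 :=
    div_nonneg (occupationRate_pos d).le (sq_nonneg _)
  have hN' : (N : ℝ) ^ 2 ≠ 0 := pow_ne_zero 2 (by exact_mod_cast (by omega : N ≠ 0))
  calc _ ≤ ENNReal.ofReal (Real.exp (-(occupationRate d / (N : ℝ) ^ 2) * (lam * (N : ℝ) ^ 2))) *
          ∫⁻ ω, expOccupation (occupationRate d / (N : ℝ) ^ 2) (cube 0 N) ω ∂μ :=
        measure_ge_le_of_ofReal_exp_le hrate measurable_expOccupation.aemeasurable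
          (hμ.ae_ofReal_exp_hitIdx_le_expOccupation (by omega) hx hrate) _
    _ ≤ ENNReal.ofReal (Real.exp (-occupationRate d * lam)) * 2 := by
        rw [mul_comm lam, ← mul_assoc, neg_mul, div_mul_cancel₀ _ hN']
        gcongr
        exact hμ.lintegral_expOccupation_cube_le hd hN
    _ = ENNReal.ofReal (2 * Real.exp (-occupationRate d * lam)) := by
        rw [ENNReal.ofReal_mul two_pos.le, ENNReal.ofReal_ofNat, mul_comm]

end Cube

theorem lerw_length_upper_moments_and_tail_general :
    ∀ d : ℕ, 3 ≤ d → ∃ C₂ : ℝ, 0 < C₂ ∧ ∃ c C : ℝ, 0 < c ∧ 0 < C ∧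
      ∀ (x : V d) (μ : Measure (ℕ → V d)), IsSRWLaw μ x →
        (∀ k N : ℕ, 1 ≤ N → x ∈ cube 0 N →
          ∫⁻ ω, ((hitIdx (innerBdry (cube 0 N)) (lerw Set.univ ω) : ℝ≥0∞)) ^ k ∂μ
            ≤ ENNReal.ofReal (C₂ ^ k * (Nat.factorial k : ℝ) * (N : ℝ) ^ (2 * k))) ∧
        (∀ (N : ℕ) (lam : ℝ), 1 ≤ N → x ∈ cube 0 N →
          (μ { ω | lam * (N : ℝ) ^ 2 ≤
              ((hitIdx (innerBdry (cube 0 N)) (lerw Set.univ ω) : ℝ)) }).toReal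
            ≤ C * Real.exp (-c * lam)) := by
  intro d hd
  refine ⟨2 / occupationRate d, div_pos two_pos (occupationRate_pos d), occupationRate d, 2,
    occupationRate_pos d, two_pos, fun x μ hμ => ⟨fun k N hN hx => ?_, fun N lam hN hx => ?_⟩⟩
  · exact hμ.lintegral_hitIdx_innerBdry_cube_pow_le hd hN hx k
  · exact ENNReal.toReal_le_of_le_ofReal (by positivity)
      (hμ.measure_hitIdx_innerBdry_cube_ge_le hd hN hx lam)

/-- Lemma 5.6.  Let `d ≥ 5` and let `L` be the chronological loop erasure of the
(transient) simple random walk on `ℤ^d` from `0`, and `M_N` the number of steps of `L`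
until its first hit of `∂ᵢQ_N`.  There is `C₂ = C₂(d)` with
`E( M_N^k ) ≤ C₂^k k! N^{2k}` for all `k ≥ 0`, `N ≥ 1`; consequently there are
`c > 0` and `C` with `P( M_N ≥ λ N² ) ≤ C exp(-c λ)` for all `λ > 0`, `N ≥ 1`. -/
theorem lerw_length_upper_moments_and_tail :
    ∀ d : ℕ, 5 ≤ d → ∃ C₂ : ℝ, 0 < C₂ ∧ ∃ c C : ℝ, 0 < c ∧ 0 < C ∧
      ∀ μ : Measure (ℕ → V d), IsSRWLaw μ 0 →
        (∀ k N : ℕ, 1 ≤ N →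
          ∫⁻ ω, ((hitIdx (innerBdry (cube 0 N)) (lerw Set.univ ω) : ℝ≥0∞)) ^ k ∂μ
            ≤ ENNReal.ofReal (C₂ ^ k * (Nat.factorial k : ℝ) * (N : ℝ) ^ (2 * k))) ∧
        (∀ (N : ℕ) (lam : ℝ), 1 ≤ N → 0 < lam →
          (μ { ω | lam * (N : ℝ) ^ 2 ≤
              ((hitIdx (innerBdry (cube 0 N)) (lerw Set.univ ω) : ℝ)) }).toReal
            ≤ C * Real.exp (-c * lam)) := by
  intro d hd
  obtain ⟨C₂, hC₂, c, C, hc, hC, h⟩ := lerw_length_upper_moments_and_tail_general d (by omega)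
  have h0 : ∀ N : ℕ, (0 : V d) ∈ cube 0 N := fun N => by simp [cube]
  exact ⟨C₂, hC₂, c, C, hc, hC, fun μ hμ => ⟨fun k N hN => (h 0 μ hμ).1 k N hN (h0 N),
    fun N lam hN _ => (h 0 μ hμ).2 N lam hN (h0 N)⟩⟩

end USFPaper
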